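/- arXiv:2407.07741 — 9 statements merged into one kernel-verified Lean document; each statement's English description precedes it below -/
import Mathlib

section
/- Let R be a poset function on a nonempty finite set V. Then the relation ⪰_R on V defined by u ⪰_R v if and only if R(u,v) ≠ ∅ is a partial order (reflexive, antisymmetric, transitive). Moreover, for all u,v ∈ V, R(u,v) = {x ∈ V : R(u,x) ≠ ∅ and R(x,v) ≠ ∅}, i.e., the directed transit function of the partial order ⪰_R equals R. -/
/-- A directed transit function on `V`: axioms (t0), (t1) and (t3), in this order. The emptiness of
`R u v` encodes that `v` is not reachable from `u`. -/
structure IsDirectedTransitFunction {V : Type*} (R : V → V → Set V) : Prop where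
  ne_empty_trans : ∀ u v w, R u w ≠ ∅ → R w v ≠ ∅ → R u v ≠ ∅
  endpoints_mem : ∀ u v, R u v ≠ ∅ → u ∈ R u v ∧ v ∈ R u v
  self_eq_singleton : ∀ u, R u u = {u}

/-- A poset function on `V`: a directed transit function that also satisfies (t2a), (tr1) and (tr2),
in this order. These functions axiomatize the intervals `{x | u ⪰ x ∧ x ⪰ v}` of a partial order. -/
structure IsPosetFunction {V : Type*} (R : V → V → Set V) : Prop
    extends IsDirectedTransitFunction R where
  eq_empty_symm : ∀ u v, R u v ≠ ∅ → u ≠ v → R v u = ∅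
  union_subset : ∀ u v w, u ≠ v → R u w ≠ ∅ → R w v ≠ ∅ → R u w ∪ R w v ⊆ R u v
  notMem_of_eq_empty : ∀ u v w, u ≠ v → (R u w = ∅ ∨ R w v = ∅) → w ∉ R u v

section

variable {V : Type*} {R : V → V → Set V} {u v x : V}

theorem IsDirectedTransitFunction.self_ne_empty (hR : IsDirectedTransitFunction R) (u : V) :
    R u u ≠ ∅ :=
  hR.self_eq_singleton u ▸ Set.singleton_ne_empty u

namespace IsPosetFunction

theorem eq_of_ne_empty (hR : IsPosetFunction R) (huv : R u v ≠ ∅) (hvu : R v u ≠ ∅) : u = v :=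
  by_contra fun hne => hvu (hR.eq_empty_symm u v huv hne)

theorem mem_self_iff (hR : IsPosetFunction R) : x ∈ R u u ↔ R u x ≠ ∅ ∧ R x u ≠ ∅ := by
  rw [hR.self_eq_singleton, Set.mem_singleton_iff]
  constructor
  · rintro rfl
    exact ⟨hR.self_ne_empty x, hR.self_ne_empty x⟩
  · rintro ⟨hux, hxu⟩
    exact hR.eq_of_ne_empty hxu hux

theorem mem_iff_of_ne (hR : IsPosetFunction R) (huv : u ≠ v) :
    x ∈ R u v ↔ R u x ≠ ∅ ∧ R x v ≠ ∅ := by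
  constructor
  · intro hx
    exact ⟨fun hux => hR.notMem_of_eq_empty u v x huv (.inl hux) hx,
      fun hxv => hR.notMem_of_eq_empty u v x huv (.inr hxv) hx⟩
  · rintro ⟨hux, hxv⟩
    have x_mem : x ∈ R u x := (hR.endpoints_mem u x hux).2
    exact hR.union_subset u v x huv hux hxv (.inl x_mem)

-- (tr1) and (tr2) say nothing about `R u u`; there antisymmetry takes over.
theorem mem_iff (hR : IsPosetFunction R) : x ∈ R u v ↔ R u x ≠ ∅ ∧ R x v ≠ ∅ := by
  obtain rfl | huv := eq_or_ne u v
  · exact hR.mem_self_iff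
  · exact hR.mem_iff_of_ne huv

end IsPosetFunction

theorem stmt_2_general (hR : IsPosetFunction R) :
    (∀ u, R u u ≠ ∅) ∧
    (∀ u v, R u v ≠ ∅ → R v u ≠ ∅ → u = v) ∧
    (∀ u v w, R u v ≠ ∅ → R v w ≠ ∅ → R u w ≠ ∅) ∧
    (∀ u v, R u v = {x : V | R u x ≠ ∅ ∧ R x v ≠ ∅}) :=
  ⟨hR.self_ne_empty, fun _ _ => hR.eq_of_ne_empty, fun u v w => hR.ne_empty_trans u w v,
    fun _ _ => Set.ext fun _ => hR.mem_iff⟩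

end

/-- For a poset function `R` on a nonempty finite set `V`, the relation
`u ⪰_R v ↔ R(u,v) ≠ ∅` is a partial order, and the directed transit function of `⪰_R`
equals `R`. -/
theorem stmt_2 {V : Type*} [Fintype V] [Nonempty V]
    (R : V → V → Set V)
    -- (t0)
    (t0 : ∀ u v w, R u w ≠ ∅ → R w v ≠ ∅ → R u v ≠ ∅)
    -- (t1)
    (t1 : ∀ u v, R u v ≠ ∅ → u ∈ R u v ∧ v ∈ R u v)
    -- (t3)
    (t3 : ∀ u, R u u = {u})
    -- (t2a)
    (t2a : ∀ u v, R u v ≠ ∅ → u ≠ v → R v u = ∅)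
    -- (tr1)
    (tr1 : ∀ u v w, u ≠ v → R u w ≠ ∅ → R w v ≠ ∅ → R u w ∪ R w v ⊆ R u v)
    -- (tr2)
    (tr2 : ∀ u v w, u ≠ v → (R u w = ∅ ∨ R w v = ∅) → w ∉ R u v) :
    -- ⪰_R is reflexive
    (∀ u, R u u ≠ ∅) ∧
    -- ⪰_R is antisymmetric
    (∀ u v, R u v ≠ ∅ → R v u ≠ ∅ → u = v) ∧
    -- ⪰_R is transitive
    (∀ u v w, R u v ≠ ∅ → R v w ≠ ∅ → R u w ≠ ∅) ∧
    -- the directed transit function of ⪰_R equals R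
    (∀ u v, R u v = {x : V | R u x ≠ ∅ ∧ R x v ≠ ∅}) :=
  stmt_2_general ⟨⟨t0, t1, t3⟩, t2a, tr1, tr2⟩
end

section
/- Let R be a directed transit function on a nonempty finite set V. Then R satisfies (tr1) and (tr2) if and only if R satisfies (tr): for all u,v,w ∈ V with u ≠ v, one has w ∈ R(u,v) if and only if R(u,w) ≠ ∅ and R(w,v) ≠ ∅. -/
/-!
Read `R u v ≠ ∅` as "`v` is reachable from `u`". Axiom (tr2) is the contrapositive of one half of
(tr), and (tr1) gives the other half because (tr1) for the triple `u, w, w` puts `w` into `R u w`.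
Conversely, under (tr) reachability is transitive, as the intermediate point `w` itself witnesses
`R u v ≠ ∅`; so a point `x` of `R u w` is reachable from `u` and reaches `v` through `w`,
that is, `x ∈ R u v`, and symmetrically for a point of `R w v`.
-/

section TransitAxioms

variable {V : Type*} {R : V → V → Set V} {u v w : V}

/-- Axiom (tr1): `R u v` absorbs `R u w` and `R w v` whenever `w` is reachable from `u` and `v` is
reachable from `w`. -/
def TransitTr1 (R : V → V → Set V) : Prop :=
  ∀ u v w, u ≠ v → R u w ≠ ∅ → R w v ≠ ∅ → R u w ∪ R w v ⊆ R u v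

/-- Axiom (tr2): `R u v` avoids every `w` that is not reachable from `u` or does not reach `v`. -/
def TransitTr2 (R : V → V → Set V) : Prop :=
  ∀ u v w, u ≠ v → (R u w = ∅ ∨ R w v = ∅) → w ∉ R u v

/-- Axiom (tr): for `u ≠ v`, the set `R u v` consists of the points reachable from `u` that
reach `v`. -/
def TransitTr (R : V → V → Set V) : Prop :=
  ∀ u v w, u ≠ v → (w ∈ R u v ↔ R u w ≠ ∅ ∧ R w v ≠ ∅)

theorem transitTr2_iff_forall_mem_imp_ne_empty :
    TransitTr2 R ↔ ∀ u v w, u ≠ v → w ∈ R u v → R u w ≠ ∅ ∧ R w v ≠ ∅ :=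
  forall₄_congr fun _ _ _ _ => by rw [imp_not_comm, not_or]

theorem TransitTr1.right_mem (h : TransitTr1 R) (hrefl : ∀ u, u ∈ R u u) (huv : R u v ≠ ∅) :
    v ∈ R u v := by
  obtain rfl | hne := eq_or_ne u v
  · exact hrefl u
  · have hvv : R v v ≠ ∅ := Set.Nonempty.ne_empty ⟨v, hrefl v⟩
    exact h u v v hne huv hvv (Or.inr (hrefl v))

theorem TransitTr1.transitTr (h₁ : TransitTr1 R) (h₂ : TransitTr2 R) (hrefl : ∀ u, u ∈ R u u) :
    TransitTr R := fun u v w hne =>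
  ⟨transitTr2_iff_forall_mem_imp_ne_empty.1 h₂ u v w hne,
    fun ⟨huw, hwv⟩ => h₁ u v w hne huw hwv (Or.inl (h₁.right_mem hrefl huw))⟩

namespace TransitTr

theorem transitTr2 (h : TransitTr R) : TransitTr2 R :=
  transitTr2_iff_forall_mem_imp_ne_empty.2 fun u v w hne => (h u v w hne).1

theorem ne_empty_trans (h : TransitTr R) (hrefl : ∀ u, u ∈ R u u) (huw : R u w ≠ ∅)
    (hwv : R w v ≠ ∅) : R u v ≠ ∅ := by
  obtain rfl | hne := eq_or_ne u v
  · exact Set.Nonempty.ne_empty ⟨u, hrefl u⟩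
  · exact Set.Nonempty.ne_empty ⟨w, (h u v w hne).2 ⟨huw, hwv⟩⟩

theorem ne_empty_of_mem (h : TransitTr R) (hdiag : ∀ u, R u u ⊆ {u}) (hw : w ∈ R u v) :
    R u w ≠ ∅ ∧ R w v ≠ ∅ := by
  obtain rfl | hne := eq_or_ne u v
  · obtain rfl : w = u := hdiag u hw
    have hww : R w w ≠ ∅ := Set.Nonempty.ne_empty ⟨w, hw⟩
    exact ⟨hww, hww⟩
  · exact (h u v w hne).1 hw

theorem transitTr1 (h : TransitTr R) (t3 : ∀ u, R u u = {u}) : TransitTr1 R := by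
  have hrefl : ∀ u, u ∈ R u u := fun u => (t3 u).symm.subset rfl
  have hdiag : ∀ u, R u u ⊆ {u} := fun u => (t3 u).subset
  rintro u v w hne huw hwv x (hx | hx)
  · obtain ⟨hux, hxw⟩ := h.ne_empty_of_mem hdiag hx
    exact (h u v x hne).2 ⟨hux, h.ne_empty_trans hrefl hxw hwv⟩
  · obtain ⟨hwx, hxv⟩ := h.ne_empty_of_mem hdiag hx
    exact (h u v x hne).2 ⟨h.ne_empty_trans hrefl huw hwx, hxv⟩

end TransitTr

theorem stmt_3_general (t3 : ∀ u, R u u = {u}) : TransitTr1 R ∧ TransitTr2 R ↔ TransitTr R :=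
  ⟨fun ⟨h₁, h₂⟩ => h₁.transitTr h₂ fun u => (t3 u).symm.subset rfl,
    fun h => ⟨h.transitTr1 t3, h.transitTr2⟩⟩

end TransitAxioms

/-- A directed transit function `R` satisfies (tr1) and (tr2) if and only if
it satisfies (tr): for all `u ≠ v`, `w ∈ R(u,v) ↔ R(u,w) ≠ ∅ ∧ R(w,v) ≠ ∅`. -/
theorem stmt_3 {V : Type*} [Fintype V] [Nonempty V]
    (R : V → V → Set V)
    -- (t0)
    (t0 : ∀ u v w, R u w ≠ ∅ → R w v ≠ ∅ → R u v ≠ ∅)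
    -- (t1)
    (t1 : ∀ u v, R u v ≠ ∅ → u ∈ R u v ∧ v ∈ R u v)
    -- (t3)
    (t3 : ∀ u, R u u = {u}) :
    ((∀ u v w, u ≠ v → R u w ≠ ∅ → R w v ≠ ∅ → R u w ∪ R w v ⊆ R u v) ∧
     (∀ u v w, u ≠ v → (R u w = ∅ ∨ R w v = ∅) → w ∉ R u v))
    ↔
    (∀ u v w, u ≠ v → (w ∈ R u v ↔ R u w ≠ ∅ ∧ R w v ≠ ∅)) :=
  stmt_3_general t3
end

section
/- Let R be a poset function on a nonempty finite set V. Then R satisfies axiom (q): for all u,v,w ∈ V, R(u,w) ∩ R(w,v) equals either {w} or ∅. -/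
/-!
Read `R u v ≠ ∅` as `u ≤ v`. Every `x ∈ R u v` satisfies `u ≤ x ≤ v`, so an element of
`R u w ∩ R w v` lies both below and above `w`, and antisymmetry (t2a) makes it equal to `w`.
-/

section TransitFunction

variable {V : Type*} {R : V → V → Set V}

theorem ne_empty_and_ne_empty_of_mem (t3 : ∀ u, R u u = {u})
    (tr2 : ∀ u v w, u ≠ v → (R u w = ∅ ∨ R w v = ∅) → w ∉ R u v)
    {u v x : V} (hx : x ∈ R u v) : R u x ≠ ∅ ∧ R x v ≠ ∅ := by
  rcases eq_or_ne u v with rfl | huv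
  · obtain rfl : x = u := by rwa [t3] at hx
    simp [t3]
  · exact not_or.mp fun hempty => tr2 u v x huv hempty hx

theorem inter_subset_singleton (t3 : ∀ u, R u u = {u})
    (t2a : ∀ u v, R u v ≠ ∅ → u ≠ v → R v u = ∅)
    (tr2 : ∀ u v w, u ≠ v → (R u w = ∅ ∨ R w v = ∅) → w ∉ R u v)
    (u v w : V) : R u w ∩ R w v ⊆ {w} := by
  rintro x ⟨hxuw, hxwv⟩
  have x_below_w : R x w ≠ ∅ := (ne_empty_and_ne_empty_of_mem t3 tr2 hxuw).2
  have w_below_x : R w x ≠ ∅ := (ne_empty_and_ne_empty_of_mem t3 tr2 hxwv).1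
  exact of_not_not fun hxw => w_below_x (t2a x w x_below_w hxw)

theorem stmt_4_general (t3 : ∀ u, R u u = {u})
    (t2a : ∀ u v, R u v ≠ ∅ → u ≠ v → R v u = ∅)
    (tr2 : ∀ u v w, u ≠ v → (R u w = ∅ ∨ R w v = ∅) → w ∉ R u v) :
    ∀ u v w, R u w ∩ R w v = {w} ∨ R u w ∩ R w v = ∅ :=
  fun u v w => (Set.subset_singleton_iff_eq.mp (inter_subset_singleton t3 t2a tr2 u v w)).symm

end TransitFunction

/-- A poset function `R` on a nonempty finite set satisfies axiom (q):
`R(u,w) ∩ R(w,v)` equals `{w}` or `∅`. -/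
theorem stmt_4 {V : Type*} [Fintype V] [Nonempty V]
    (R : V → V → Set V)
    -- (t0)
    (t0 : ∀ u v w, R u w ≠ ∅ → R w v ≠ ∅ → R u v ≠ ∅)
    -- (t1)
    (t1 : ∀ u v, R u v ≠ ∅ → u ∈ R u v ∧ v ∈ R u v)
    -- (t3)
    (t3 : ∀ u, R u u = {u})
    -- (t2a)
    (t2a : ∀ u v, R u v ≠ ∅ → u ≠ v → R v u = ∅)
    -- (tr1)
    (tr1 : ∀ u v w, u ≠ v → R u w ≠ ∅ → R w v ≠ ∅ → R u w ∪ R w v ⊆ R u v)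
    -- (tr2)
    (tr2 : ∀ u v w, u ≠ v → (R u w = ∅ ∨ R w v = ∅) → w ∉ R u v) :
    ∀ u v w, R u w ∩ R w v = {w} ∨ R u w ∩ R w v = ∅ := stmt_4_general t3 t2a tr2
end

section
/- Let G be a finite directed acyclic graph, let R_G = A_G be its all-paths transit function, and let G_{R_G} be the underlying digraph of R_G. Then G = G_{R_G} if and only if G contains no shortcut, i.e., no edge (x_1, x_k) for which G contains a directed path from x_1 to x_k of length at least 2. -/
/-- A directed path from `u` to `v` w.r.t. the edge relation `E`: a nonempty list of
pairwise distinct vertices starting at `u`, ending at `v`, with every consecutive pair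
an edge. Its length (number of edges) is `p.length - 1`. -/
def IsDiPath {V : Type*} (E : V → V → Prop) (u v : V) (p : List V) : Prop :=
  p.Chain' E ∧ p.Nodup ∧ p.head? = some u ∧ p.getLast? = some v

/-- The edge relation of the underlying digraph `G_R` of `R`. -/
def underlyingEdge {V : Type*} (R : V → V → Set V) (x y : V) : Prop :=
  x ≠ y ∧ R x y = {x, y}

/-- The all-paths transit function of the digraph with edge relation `E`. -/
def allPaths {V : Type*} (E : V → V → Prop) (u v : V) : Set V :=
  {x : V | ∃ p : List V, IsDiPath E u v p ∧ x ∈ p}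

/-!
If `x ≠ y` and every vertex on a path from `x` to `y` is `x` or `y`, then the path has exactly these
two vertices and so consists of the single edge `(x, y)`. Hence `A_G(x, y) = {x, y}` says that
`(x, y)` is an edge and the only path from `x` to `y`, i.e. an edge that is not a shortcut.
-/

section

variable {V : Type*} {E : V → V → Prop} {x y : V} {p : List V}

/-- The pair `(x, y)` is a shortcut: an edge whose endpoints are also joined by a directed path of
length at least 2, that is, with at least 3 vertices. -/
def IsShortcut (E : V → V → Prop) (x y : V) : Prop :=
  E x y ∧ ∃ p : List V, IsDiPath E x y p ∧ 3 ≤ p.length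

theorem isDiPath_pair_iff : IsDiPath E x y [x, y] ↔ x ≠ y ∧ E x y :=
  ⟨fun ⟨hchain, hnodup, _⟩ => ⟨by simpa using hnodup, List.isChain_pair.1 hchain⟩,
    fun ⟨hxy, hE⟩ => ⟨List.isChain_pair.2 hE, by simpa using hxy, rfl, rfl⟩⟩

theorem IsDiPath.subset_allPaths (hp : IsDiPath E x y p) : {z | z ∈ p} ⊆ allPaths E x y :=
  fun _ hz => ⟨p, hp, hz⟩

theorem IsDiPath.eq_pair_of_length_lt_three (hp : IsDiPath E x y p) (hxy : x ≠ y)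
    (hlen : p.length < 3) : p = [x, y] := by
  obtain ⟨-, -, hhead, hlast⟩ := hp
  match p with
  | [] | [_] | [_, _] => simp_all
  | _ :: _ :: _ :: _ => simp only [List.length_cons] at hlen; omega

theorem IsDiPath.length_lt_three_of_allPaths_eq_pair (hp : IsDiPath E x y p)
    (hR : allPaths E x y = {x, y}) : p.length < 3 := by
  have hsub : p ⊆ [x, y] := fun z hz => by simpa [hR] using hp.subset_allPaths hz
  exact Nat.lt_succ_of_le (List.subperm_of_subset hp.2.1 hsub).length_le

theorem underlyingEdge_allPaths_iff :
    underlyingEdge (allPaths E) x y ↔ x ≠ y ∧ E x y ∧ ¬ IsShortcut E x y := by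
  constructor
  · rintro ⟨hxy, hR⟩
    obtain ⟨p, hp, -⟩ : x ∈ allPaths E x y := by simp [hR]
    obtain rfl := hp.eq_pair_of_length_lt_three hxy (hp.length_lt_three_of_allPaths_eq_pair hR)
    refine ⟨hxy, (isDiPath_pair_iff.1 hp).2, ?_⟩
    rintro ⟨-, q, hq, hlen⟩
    exact hlen.not_gt (hq.length_lt_three_of_allPaths_eq_pair hR)
  · rintro ⟨hxy, hE, hns⟩
    refine ⟨hxy, Set.Subset.antisymm ?_ ?_⟩
    · rintro z ⟨p, hp, hz⟩
      have hlen : p.length < 3 := not_le.1 fun hlen => hns ⟨hE, p, hp, hlen⟩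
      obtain rfl := hp.eq_pair_of_length_lt_three hxy hlen
      simpa using hz
    · simpa [Set.subset_def] using (isDiPath_pair_iff.2 ⟨hxy, hE⟩).subset_allPaths

theorem stmt_7_general (h_irrefl : ∀ x, ¬ E x x) :
    (∀ x y, E x y ↔ underlyingEdge (allPaths E) x y) ↔ ¬ ∃ x y, IsShortcut E x y := by
  simp only [underlyingEdge_allPaths_iff, not_exists]
  refine forall₂_congr fun x y => ⟨fun h hs => (h.1 hs.1).2.2 hs, fun hns => ?_⟩
  have ne_of_edge : E x y → x ≠ y := fun hE hxy => h_irrefl y (hxy ▸ hE)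
  exact ⟨fun hE => ⟨ne_of_edge hE, hE, hns⟩, fun h => h.2.1⟩

end

/-- Let `G` be a finite DAG with (irreflexive) edge relation `E`, let
`R_G = A_G` be its all-paths transit function. Then `G` coincides with the underlying
digraph of `R_G` if and only if `G` contains no shortcut, i.e. no edge `(x,y)` for which
there is a directed path from `x` to `y` of length at least 2 (at least 3 vertices). -/
theorem stmt_7 {V : Type*} [Fintype V]
    (E : V → V → Prop)
    (h_irrefl : ∀ x, ¬ E x x)
    -- G is acyclic: no directed path from u to v closed up by an edge (v,u)
    (h_acyclic : ∀ (u v : V) (p : List V), IsDiPath E u v p → ¬ E v u) :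
    (∀ x y, E x y ↔ underlyingEdge (allPaths E) x y)
    ↔
    ¬ (∃ (x y : V) (p : List V), E x y ∧ IsDiPath E x y p ∧ 3 ≤ p.length) := by
  simpa only [IsShortcut, exists_and_left] using stmt_7_general h_irrefl
end

section
/- Let R be a poset function on a nonempty finite set V satisfying axiom (r). Then the underlying digraph G_R contains a unique source vertex, i.e., a unique vertex with no incoming edge. -/
/-!
`u ≤ v ↔ R u v ≠ ∅` is a partial order, and `{u, v} ⊆ R u v ⊆ Set.Icc u v` whenever `u ≤ v`. Hence
every edge of `G_R` goes strictly upwards and every covering pair is an edge. As long as each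
non-minimal element has a lower cover, the sources are therefore the minimal elements, and axiom (r)
makes the order codirected, so that a minimal element is the least one.
-/

theorem existsUnique_isMin {α : Type*} [PartialOrder α] [IsCodirectedOrder α] [WellFoundedLT α]
    [Nonempty α] : ∃! a : α, IsMin a := by
  obtain ⟨m, hm⟩ := exists_minimal_of_wellFoundedLT (fun _ : α => True) (by simp)
  have hm : IsMin m := minimal_true.mp hm
  exact ⟨m, hm, fun a ha => (ha.isBot m).antisymm (hm.isBot a)⟩

/-- `R u v` is a subset of the order interval `Set.Icc u v` which contains both endpoints when
`u ≤ v`: what the transit axioms say about `R` in terms of its order, and enough to locate the edges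
of `G_R`. Since `Set.Icc u v = ∅` for `¬ u ≤ v`, the second field gives `R u v = ∅` there. -/
structure IsSubintervalFunction {V : Type*} [Preorder V] (R : V → V → Set V) : Prop where
  pair_subset : ∀ {u v : V}, u ≤ v → {u, v} ⊆ R u v
  subset_Icc : ∀ u v : V, R u v ⊆ Set.Icc u v

namespace IsSubintervalFunction

theorem of_le_iff {V : Type*} [Preorder V] {R : V → V → Set V}
    (le_iff : ∀ u v, u ≤ v ↔ R u v ≠ ∅)
    (t1 : ∀ u v, R u v ≠ ∅ → u ∈ R u v ∧ v ∈ R u v)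
    (t3 : ∀ u, R u u = {u})
    (tr2 : ∀ u v w, u ≠ v → (R u w = ∅ ∨ R w v = ∅) → w ∉ R u v) :
    IsSubintervalFunction R where
  pair_subset {u v} huv := Set.pair_subset_iff.mpr (t1 u v ((le_iff u v).mp huv))
  subset_Icc u v w hw := by
    rcases eq_or_ne u v with rfl | huv
    · obtain rfl : w = u := by rwa [t3] at hw
      exact ⟨le_rfl, le_rfl⟩
    · exact ⟨(le_iff u w).mpr fun huw => tr2 u v w huv (.inl huw) hw,
        (le_iff w v).mpr fun hwv => tr2 u v w huv (.inr hwv) hw⟩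

variable {V : Type*} [PartialOrder V] {R : V → V → Set V} {u v : V}

theorem lt_of_underlyingEdge (hR : IsSubintervalFunction R) (h : underlyingEdge R u v) :
    u < v := by
  have hv : v ∈ R u v := h.2 ▸ Set.mem_insert_of_mem u rfl
  exact (hR.subset_Icc u v hv).1.lt_of_ne h.1

theorem underlyingEdge_of_covBy (hR : IsSubintervalFunction R) (h : u ⋖ v) :
    underlyingEdge R u v :=
  ⟨h.ne, (h.Icc_eq ▸ hR.subset_Icc u v).antisymm (hR.pair_subset h.le)⟩

theorem forall_not_underlyingEdge_iff_isMin [IsStronglyCoatomic V]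
    (hR : IsSubintervalFunction R) : (∀ u, ¬ underlyingEdge R u v) ↔ IsMin v := by
  refine ⟨fun hv => ?_, fun hv u huv => hv.not_lt (hR.lt_of_underlyingEdge huv)⟩
  by_contra hmin
  obtain ⟨u, huv⟩ := not_isMin_iff.mp hmin
  obtain ⟨w, -, hwv⟩ := exists_le_covBy_of_lt huv
  exact hv w (hR.underlyingEdge_of_covBy hwv)

end IsSubintervalFunction

/-- The partial order `u ≤ v ↔ R u v ≠ ∅` of a transit function. The strict order is spelled out
as `u ≠ v ∧ R u v ≠ ∅`, so that chain conditions can be stated in terms of `R`. -/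
abbrev transitOrder {V : Type*} (R : V → V → Set V)
    (t0 : ∀ u v w, R u w ≠ ∅ → R w v ≠ ∅ → R u v ≠ ∅)
    (t3 : ∀ u, R u u = {u})
    (t2a : ∀ u v, R u v ≠ ∅ → u ≠ v → R v u = ∅) : PartialOrder V where
  le u v := R u v ≠ ∅
  lt u v := u ≠ v ∧ R u v ≠ ∅
  le_refl u := t3 u ▸ Set.singleton_ne_empty u
  le_trans u w v := t0 u v w
  lt_iff_le_not_ge u v :=
    ⟨fun ⟨hne, huv⟩ => ⟨huv, not_not.mpr (t2a u v huv hne)⟩,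
      fun ⟨huv, hvu⟩ => ⟨fun h => hvu (h ▸ huv), huv⟩⟩
  le_antisymm u v huv hvu := by_contra fun hne => hvu (t2a u v huv hne)

theorem stmt_11_general {V : Type*} [Nonempty V] (R : V → V → Set V)
    (t0 : ∀ u v w, R u w ≠ ∅ → R w v ≠ ∅ → R u v ≠ ∅)
    (t1 : ∀ u v, R u v ≠ ∅ → u ∈ R u v ∧ v ∈ R u v)
    (t3 : ∀ u, R u u = {u})
    (t2a : ∀ u v, R u v ≠ ∅ → u ≠ v → R v u = ∅)
    (tr2 : ∀ u v w, u ≠ v → (R u w = ∅ ∨ R w v = ∅) → w ∉ R u v)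
    (axr : ∀ u v, R u v = ∅ → R v u = ∅ → ∃ w, R w u ≠ ∅ ∧ R w v ≠ ∅)
    (wf_lt : WellFounded fun u v => u ≠ v ∧ R u v ≠ ∅)
    (wf_gt : WellFounded fun u v => v ≠ u ∧ R v u ≠ ∅) :
    ∃! w : V, ∀ x : V, ¬ underlyingEdge R x w := by
  let _ : PartialOrder V := transitOrder R t0 t3 t2a
  have : WellFoundedLT V := ⟨wf_lt⟩
  have : WellFoundedGT V := ⟨wf_gt⟩
  have : IsCodirectedOrder V := ⟨fun u v => by
    by_cases huv : u ≤ v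
    · exact ⟨u, le_rfl, huv⟩
    by_cases hvu : v ≤ u
    · exact ⟨v, hvu, le_rfl⟩
    exact axr u v (not_not.mp huv) (not_not.mp hvu)⟩
  have hR : IsSubintervalFunction R := .of_le_iff (fun _ _ => Iff.rfl) t1 t3 tr2
  simpa only [hR.forall_not_underlyingEdge_iff_isMin] using existsUnique_isMin (α := V)

/-- Let `R` be a poset function on a nonempty finite set satisfying axiom
(r). Then the underlying digraph `G_R` contains a unique source vertex (a vertex with no
incoming edge). -/
theorem stmt_11 {V : Type*} [Fintype V] [Nonempty V]
    (R : V → V → Set V)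
    -- (t0)
    (t0 : ∀ u v w, R u w ≠ ∅ → R w v ≠ ∅ → R u v ≠ ∅)
    -- (t1)
    (t1 : ∀ u v, R u v ≠ ∅ → u ∈ R u v ∧ v ∈ R u v)
    -- (t3)
    (t3 : ∀ u, R u u = {u})
    -- (t2a)
    (t2a : ∀ u v, R u v ≠ ∅ → u ≠ v → R v u = ∅)
    -- (tr1)
    (tr1 : ∀ u v w, u ≠ v → R u w ≠ ∅ → R w v ≠ ∅ → R u w ∪ R w v ⊆ R u v)
    -- (tr2)
    (tr2 : ∀ u v w, u ≠ v → (R u w = ∅ ∨ R w v = ∅) → w ∉ R u v)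
    -- (r)
    (axr : ∀ u v, R u v = ∅ → R v u = ∅ → ∃ w, R w u ≠ ∅ ∧ R w v ≠ ∅) :
    ∃! w : V, ∀ x : V, ¬ underlyingEdge R x w := by
  let _ : PartialOrder V := transitOrder R t0 t3 t2a
  exact stmt_11_general R t0 t1 t3 t2a tr2 axr wellFounded_lt wellFounded_gt
end

section
/- Let R be a directed transit function on a nonempty finite set V and let G_R be its underlying digraph. If R(u,v) = ∅, then there is no directed path from u to v in G_R. -/
theorem IsDiPath.reflTransGen {V : Type*} {E : V → V → Prop} {u v : V} {p : List V}
    (hp : IsDiPath E u v p) : Relation.ReflTransGen E u v := by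
  obtain ⟨hchain, -, hhead, hlast⟩ := hp
  obtain ⟨q, rfl⟩ := List.head?_eq_some_iff.mp hhead
  exact List.relationReflTransGen_of_exists_isChain_cons q hchain
    (List.getLast_of_getLast?_eq_some hlast)

theorem underlyingEdge.ne_empty {V : Type*} {R : V → V → Set V} {x y : V}
    (hxy : underlyingEdge R x y) : R x y ≠ ∅ :=
  hxy.2 ▸ (Set.insert_nonempty x {y}).ne_empty

theorem stmt_15_general {V : Type*} {R : V → V → Set V}
    (t0 : ∀ u v w, R u w ≠ ∅ → R w v ≠ ∅ → R u v ≠ ∅)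
    {u v : V} (hu : R u u ≠ ∅) (h : R u v = ∅) :
    ¬ Relation.ReflTransGen (underlyingEdge R) u v := by
  intro hreach
  suffices R u v ≠ ∅ from this h
  clear h
  induction hreach with
  | refl => exact hu
  | tail _ hedge ih => exact t0 _ _ _ ih hedge.ne_empty

/-- For a directed transit function `R` on a nonempty finite set,
`R(u,v) = ∅` implies that there is no directed path from `u` to `v` in the underlying
digraph `G_R`. -/
theorem stmt_15 {V : Type*} [Fintype V] [Nonempty V]
    (R : V → V → Set V)
    -- (t0)
    (t0 : ∀ u v w, R u w ≠ ∅ → R w v ≠ ∅ → R u v ≠ ∅)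
    -- (t1)
    (t1 : ∀ u v, R u v ≠ ∅ → u ∈ R u v ∧ v ∈ R u v)
    -- (t3)
    (t3 : ∀ u, R u u = {u})
    (u v : V) (h : R u v = ∅) :
    ¬ ∃ p : List V, IsDiPath (underlyingEdge R) u v p := by
  rintro ⟨_, hp⟩
  exact stmt_15_general t0 (t3 u ▸ Set.singleton_ne_empty u) h hp.reflTransGen
end

section
/- Let R be a directed transit function on a nonempty finite set V satisfying axiom (tr2). If R satisfies (b3₁) and (b3₂), then R also satisfies (b4), (b1₁), and (b1₂). -/
/-!
If `x ∈ R u v` and `u ∈ R x v`, then (b3₂) with `y = u` gives `x ∈ R u u = {u}`; this is (b1₂),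
read as an antisymmetry law, and (b1₁) is its dual under reversing `R`. For (b4), a point
`y ∈ R u x ∩ R x v` satisfies `x ∈ R y v` by (b3₁), so antisymmetry applied to `x` and `y` towards
`v` forces `y = x`; conversely (tr2) makes `R u x` and `R x v` nonempty, so both contain `x`.
-/

namespace DirectedTransit

variable {V : Type*} {R : V → V → Set V} {u v x : V}

theorem eq_left_of_left_mem (self_subset : ∀ u, R u u ⊆ {u})
    (b32 : ∀ u v x y, x ∈ R u v → y ∈ R x v → x ∈ R u y)
    (hx : x ∈ R u v) (hu : u ∈ R x v) : x = u :=
  self_subset u (b32 u v x u hx hu)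

theorem eq_right_of_right_mem (self_subset : ∀ u, R u u ⊆ {u})
    (b31 : ∀ u v x y, x ∈ R u v → y ∈ R u x → x ∈ R y v)
    (hx : x ∈ R u v) (hv : v ∈ R u x) : x = v :=
  eq_left_of_left_mem (R := fun a b ↦ R b a) self_subset (fun a b ↦ b31 b a) hx hv

theorem inter_subset_singleton (self_subset : ∀ u, R u u ⊆ {u})
    (b31 : ∀ u v x y, x ∈ R u v → y ∈ R u x → x ∈ R y v)
    (b32 : ∀ u v x y, x ∈ R u v → y ∈ R x v → x ∈ R u y)
    (hx : x ∈ R u v) : R u x ∩ R x v ⊆ {x} := by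
  rintro y ⟨hy_left, hy_right⟩
  have hx_between : x ∈ R y v := b31 u v x y hx hy_left
  exact eq_left_of_left_mem self_subset b32 hy_right hx_between

theorem mem_inter_of_mem (t1 : ∀ u v, R u v ≠ ∅ → u ∈ R u v ∧ v ∈ R u v)
    (self_subset : ∀ u, R u u ⊆ {u})
    (tr2 : ∀ u v w, u ≠ v → (R u w = ∅ ∨ R w v = ∅) → w ∉ R u v)
    (hx : x ∈ R u v) : x ∈ R u x ∩ R x v := by
  rcases eq_or_ne u v with rfl | huv
  · obtain rfl : x = u := self_subset u hx
    exact ⟨hx, hx⟩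
  · have left_ne_empty : R u x ≠ ∅ := fun h ↦ tr2 u v x huv (Or.inl h) hx
    have right_ne_empty : R x v ≠ ∅ := fun h ↦ tr2 u v x huv (Or.inr h) hx
    exact ⟨(t1 u x left_ne_empty).2, (t1 x v right_ne_empty).1⟩

end DirectedTransit

open DirectedTransit in
theorem stmt_16_general {V : Type*} (R : V → V → Set V)
    (t1 : ∀ u v, R u v ≠ ∅ → u ∈ R u v ∧ v ∈ R u v)
    (self_subset : ∀ u, R u u ⊆ {u})
    (tr2 : ∀ u v w, u ≠ v → (R u w = ∅ ∨ R w v = ∅) → w ∉ R u v)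
    (b31 : ∀ u v x y, x ∈ R u v → y ∈ R u x → x ∈ R y v)
    (b32 : ∀ u v x y, x ∈ R u v → y ∈ R x v → x ∈ R u y) :
    (∀ u v x, x ∈ R u v → R u x ∩ R x v = {x}) ∧
    (∀ u v x, x ∈ R u v → x ≠ v → v ∉ R u x) ∧
    (∀ u v x, x ∈ R u v → x ≠ u → u ∉ R x v) := by
  refine ⟨fun u v x hx ↦ ?_, fun u v x hx hne hv ↦ ?_, fun u v x hx hne hu ↦ ?_⟩
  · exact (inter_subset_singleton self_subset b31 b32 hx).antisymm
      (Set.singleton_subset_iff.2 (mem_inter_of_mem t1 self_subset tr2 hx))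
  · exact hne (eq_right_of_right_mem self_subset b31 hx hv)
  · exact hne (eq_left_of_left_mem self_subset b32 hx hu)

/-- Let `R` be a directed transit function on a nonempty finite set
satisfying (tr2). If `R` satisfies (b3₁) and (b3₂), then it also satisfies (b4), (b1₁),
and (b1₂). -/
theorem stmt_16 {V : Type*} [Fintype V] [Nonempty V]
    (R : V → V → Set V)
    -- (t0)
    (t0 : ∀ u v w, R u w ≠ ∅ → R w v ≠ ∅ → R u v ≠ ∅)
    -- (t1)
    (t1 : ∀ u v, R u v ≠ ∅ → u ∈ R u v ∧ v ∈ R u v)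
    -- (t3)
    (t3 : ∀ u, R u u = {u})
    -- (tr2)
    (tr2 : ∀ u v w, u ≠ v → (R u w = ∅ ∨ R w v = ∅) → w ∉ R u v)
    -- (b3₁)
    (b31 : ∀ u v x y, x ∈ R u v → y ∈ R u x → x ∈ R y v)
    -- (b3₂)
    (b32 : ∀ u v x y, x ∈ R u v → y ∈ R x v → x ∈ R u y) :
    -- (b4)
    (∀ u v x, x ∈ R u v → R u x ∩ R x v = {x}) ∧
    -- (b1₁)
    (∀ u v x, x ∈ R u v → x ≠ v → v ∉ R u x) ∧
    -- (b1₂)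
    (∀ u v x, x ∈ R u v → x ≠ u → u ∉ R x v) :=
  stmt_16_general R t1 (fun u ↦ (t3 u).subset) tr2 b31 b32
end

section
/- Let R be a weakly geometric directed transit function on a nonempty finite set V and let G_R be its underlying digraph. Then R(u,v) ≠ ∅ if and only if there exists a directed path from u to v in G_R all of whose vertices lie in R(u,v). If R additionally satisfies (b4), then for every w ∈ R(u,v) there exists such a path that passes through w. -/
/-!
If `x ∈ R u v \ {u}` is chosen with `R u x` minimal under inclusion, then (b2) and (b1₁) leave no
room for a third vertex in `R u x`, so `(u, x)` is an edge. By (b1₂), `R x v` omits `u` and is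
strictly smaller than `R u v`, so a path from `x` to `v` inside `R x v` exists by induction and
extends by `u`. Under (b4), paths inside `R u w` and `R w v` meet only in `w` and can be
concatenated.
-/

namespace IsDiPath

variable {V : Type*} {E : V → V → Prop} {u v w : V} {p q : List V}

theorem singleton (u : V) : IsDiPath E u u [u] :=
  ⟨List.isChain_singleton u, List.nodup_singleton u, rfl, rfl⟩

theorem start_mem (hp : IsDiPath E u v p) : u ∈ p :=
  List.mem_of_mem_head? hp.2.2.1

theorem end_mem (hp : IsDiPath E u v p) : v ∈ p :=
  List.mem_of_mem_getLast? hp.2.2.2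

theorem cons (huw : E u w) (hp : IsDiPath E w v p) (hu : u ∉ p) : IsDiPath E u v (u :: p) := by
  obtain ⟨chain, nodup, head, last⟩ := hp
  obtain ⟨tail, rfl⟩ := List.head?_eq_some_iff.1 head
  exact ⟨chain.cons_cons huw, nodup.cons hu, rfl, List.getLast?_cons_cons.trans last⟩

theorem append_tail (hp : IsDiPath E u w p) (hq : IsDiPath E w v q)
    (meet : ∀ x ∈ p, x ∈ q → x = w) : IsDiPath E u v (p ++ q.tail) := by
  obtain ⟨p_chain, p_nodup, p_head, p_last⟩ := hp
  obtain ⟨q_chain, q_nodup, q_head, q_last⟩ := hq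
  obtain ⟨init, rfl⟩ := List.getLast?_eq_some_iff.1 p_last
  obtain ⟨tail, rfl⟩ := List.head?_eq_some_iff.1 q_head
  obtain ⟨w_notMem_tail, tail_nodup⟩ := List.nodup_cons.1 q_nodup
  have disjoint : (init ++ [w]).Disjoint tail := fun x hx hx' =>
    w_notMem_tail (meet x hx (List.mem_cons_of_mem w hx') ▸ hx')
  refine ⟨p_chain.append_overlap q_chain (List.cons_ne_nil w []),
    p_nodup.append tail_nodup disjoint, ?_, ?_⟩
  · rw [List.head?_append, p_head, Option.some_or]
  · rw [List.tail_cons, List.append_assoc, List.singleton_append,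
      List.getLast?_append_of_ne_nil _ (List.cons_ne_nil w tail), q_last]

end IsDiPath

section WeaklyGeometric

variable {V : Type*} {R : V → V → Set V} {u v w : V}
  (t1 : ∀ u v, R u v ≠ ∅ → u ∈ R u v ∧ v ∈ R u v)
  (tr2 : ∀ u v w, u ≠ v → (R u w = ∅ ∨ R w v = ∅) → w ∉ R u v)
  (b2 : ∀ u v x, x ∈ R u v → R u x ⊆ R u v ∧ R x v ⊆ R u v)
  (b11 : ∀ u v x, x ∈ R u v → x ≠ v → v ∉ R u x)
  (b12 : ∀ u v x, x ∈ R u v → x ≠ u → u ∉ R x v)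

include t1 tr2 b2 b11

theorem exists_mem_underlyingEdge (hfin : (R u v).Finite) (hne : R u v ≠ ∅) (huv : u ≠ v) :
    ∃ x ∈ R u v, underlyingEdge R u x := by
  obtain ⟨x, ⟨hx, hxu⟩, hmin⟩ := (hfin.sdiff (t := {u})).exists_minimalFor (R u) _
    ⟨v, (t1 u v hne).2, huv.symm⟩
  obtain ⟨hu, hx'⟩ := t1 u x fun h => tr2 u v x huv (.inl h) hx
  refine ⟨x, hx, Ne.symm hxu, Set.Subset.antisymm (fun y hy => ?_) (Set.pair_subset hu hx')⟩
  by_contra hy_notMem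
  obtain ⟨hyu, hyx⟩ : y ≠ u ∧ y ≠ x := by simpa using hy_notMem
  have hle : R u x ⊆ R u y := hmin ⟨(b2 u v x hx).1 hy, hyu⟩ (b2 u x y hy).1
  exact b11 u x y hy hyx (hle hx')

include b12

theorem exists_isDiPath_subset (hfin : (R u v).Finite) (hne : R u v ≠ ∅) :
    ∃ p, IsDiPath (underlyingEdge R) u v p ∧ ∀ x ∈ p, x ∈ R u v := by
  induction hn : (R u v).ncard using Nat.strong_induction_on generalizing u with
  | _ n ih =>
    have hu : u ∈ R u v := (t1 u v hne).1
    obtain rfl | huv := eq_or_ne u v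
    · exact ⟨[u], .singleton u, by simpa using hu⟩
    obtain ⟨x, hx, hedge⟩ := exists_mem_underlyingEdge t1 tr2 b2 b11 hfin hne huv
    have hsub : R x v ⊆ R u v := (b2 u v x hx).2
    have hu_notMem : u ∉ R x v := b12 u v x hx hedge.1.symm
    have hlt : (R x v).ncard < n :=
      hn ▸ Set.ncard_lt_ncard (hsub.ssubset_of_mem_notMem hu hu_notMem) hfin
    obtain ⟨p, hp, hpR⟩ :=
      ih _ hlt (hfin.subset hsub) (fun h => tr2 u v x huv (.inr h) hx) rfl
    exact ⟨u :: p, hp.cons hedge fun h => hu_notMem (hpR u h),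
      List.forall_mem_cons.2 ⟨hu, fun y hy => hsub (hpR y hy)⟩⟩

theorem exists_isDiPath_subset_mem (b4 : ∀ u v x, x ∈ R u v → R u x ∩ R x v = {x})
    (hfin : (R u v).Finite) (hw : w ∈ R u v) :
    ∃ p, IsDiPath (underlyingEdge R) u v p ∧ (∀ x ∈ p, x ∈ R u v) ∧ w ∈ p := by
  have hinter : R u w ∩ R w v = {w} := b4 u v w hw
  obtain ⟨hw_left, hw_right⟩ : w ∈ R u w ∩ R w v := hinter ▸ Set.mem_singleton w
  obtain ⟨hsub_left, hsub_right⟩ := b2 u v w hw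
  obtain ⟨p, hp, hpR⟩ := exists_isDiPath_subset t1 tr2 b2 b11 b12
    (hfin.subset hsub_left) (Set.nonempty_of_mem hw_left).ne_empty
  obtain ⟨q, hq, hqR⟩ := exists_isDiPath_subset t1 tr2 b2 b11 b12
    (hfin.subset hsub_right) (Set.nonempty_of_mem hw_right).ne_empty
  have meet : ∀ x ∈ p, x ∈ q → x = w := fun x hxp hxq =>
    hinter.subset ⟨hpR x hxp, hqR x hxq⟩
  refine ⟨p ++ q.tail, hp.append_tail hq meet, fun x hx => ?_, List.mem_append_left _ hp.end_mem⟩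
  obtain hxp | hxq := List.mem_append.1 hx
  · exact hsub_left (hpR x hxp)
  · exact hsub_right (hqR x (List.mem_of_mem_tail hxq))

end WeaklyGeometric

theorem stmt_17_general {V : Type*} (R : V → V → Set V)
    (hfin : ∀ u v, (R u v).Finite)
    (t1 : ∀ u v, R u v ≠ ∅ → u ∈ R u v ∧ v ∈ R u v)
    (tr2 : ∀ u v w, u ≠ v → (R u w = ∅ ∨ R w v = ∅) → w ∉ R u v)
    (b2 : ∀ u v x, x ∈ R u v → R u x ⊆ R u v ∧ R x v ⊆ R u v)
    (b11 : ∀ u v x, x ∈ R u v → x ≠ v → v ∉ R u x)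
    (b12 : ∀ u v x, x ∈ R u v → x ≠ u → u ∉ R x v) :
    (∀ u v : V, R u v ≠ ∅ ↔
        ∃ p : List V, IsDiPath (underlyingEdge R) u v p ∧ ∀ x ∈ p, x ∈ R u v) ∧
    ((∀ u v x, x ∈ R u v → R u x ∩ R x v = {x}) →
      ∀ u v w, w ∈ R u v →
        ∃ p : List V, IsDiPath (underlyingEdge R) u v p ∧ (∀ x ∈ p, x ∈ R u v) ∧
          w ∈ p) := by
  refine ⟨fun u v => ⟨exists_isDiPath_subset t1 tr2 b2 b11 b12 (hfin u v), ?_⟩,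
    fun b4 u v w => exists_isDiPath_subset_mem t1 tr2 b2 b11 b12 b4 (hfin u v)⟩
  rintro ⟨p, hp, hpR⟩
  exact Set.nonempty_iff_ne_empty.1 ⟨u, hpR u hp.start_mem⟩

/-- Let `R` be a weakly geometric directed transit function on a nonempty
finite set `V`. Then `R(u,v) ≠ ∅` iff there is a directed path from `u` to `v` in `G_R`
contained in `R(u,v)`. If `R` moreover satisfies (b4), then for every `w ∈ R(u,v)` such
a path through `w` exists. -/
theorem stmt_17 {V : Type*} [Fintype V] [Nonempty V]
    (R : V → V → Set V)
    -- (t0)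
    (t0 : ∀ u v w, R u w ≠ ∅ → R w v ≠ ∅ → R u v ≠ ∅)
    -- (t1)
    (t1 : ∀ u v, R u v ≠ ∅ → u ∈ R u v ∧ v ∈ R u v)
    -- (t3)
    (t3 : ∀ u, R u u = {u})
    -- (tr2)
    (tr2 : ∀ u v w, u ≠ v → (R u w = ∅ ∨ R w v = ∅) → w ∉ R u v)
    -- (b2)
    (b2 : ∀ u v x, x ∈ R u v → R u x ⊆ R u v ∧ R x v ⊆ R u v)
    -- (b1₁)
    (b11 : ∀ u v x, x ∈ R u v → x ≠ v → v ∉ R u x)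
    -- (b1₂)
    (b12 : ∀ u v x, x ∈ R u v → x ≠ u → u ∉ R x v) :
    (∀ u v : V, R u v ≠ ∅ ↔
        ∃ p : List V, IsDiPath (underlyingEdge R) u v p ∧ ∀ x ∈ p, x ∈ R u v) ∧
    ((∀ u v x, x ∈ R u v → R u x ∩ R x v = {x}) →
      ∀ u v w, w ∈ R u v →
        ∃ p : List V, IsDiPath (underlyingEdge R) u v p ∧ (∀ x ∈ p, x ∈ R u v) ∧
          w ∈ p) := by
  exact stmt_17_general R (fun u v => (R u v).toFinite) t1 tr2 b2 b11 b12
end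

section
/- Let (V,d) be a finite quasimetric space and let I_d be its interval function, defined by I_d(u,v) = {w ∈ V : d(u,w) + d(w,v) = d(u,v)} if d(u,v) < ∞ and I_d(u,v) = ∅ if d(u,v) = ∞. Then I_d is a geometric directed transit function: it satisfies (t0), (t1), (t3), (tr2), (b2₁), (b2₂), (b3₁), and (b3₂). -/
open ENNReal

/-!
If `x` lies between `u` and `v`, and `y` between `u` and `x`, then the path `u, y, x, v` has length
`d u v`. By the triangle inequality it is no shorter than the path `u, y, v`, so `y` lies between
`u` and `v`; cancelling the finite distance `d u y` shows that `x` lies between `y` and `v`. The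
mirror images of these two facts come from reversing `d`.
-/

/-- A directed transit function on `V`, given by the axioms (t0), (t1) and (t3). -/
structure IsDirectedTransit {V : Type*} (R : V → V → Set V) : Prop where
  t0 : ∀ u v w, R u w ≠ ∅ → R w v ≠ ∅ → R u v ≠ ∅
  t1 : ∀ u v, R u v ≠ ∅ → u ∈ R u v ∧ v ∈ R u v
  t3 : ∀ u, R u u = {u}

/-- A geometric directed transit function on `V`; the fields carry the names of the axioms, with
`b2_left`, `b2_right`, `b3_left`, `b3_right` for (b2₁), (b2₂), (b3₁), (b3₂). -/
structure IsGeometricTransit {V : Type*} (R : V → V → Set V) : Prop extends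
    IsDirectedTransit R where
  tr2 : ∀ u v w, u ≠ v → (R u w = ∅ ∨ R w v = ∅) → w ∉ R u v
  b2_left : ∀ u v x, x ∈ R u v → R u x ⊆ R u v
  b2_right : ∀ u v x, x ∈ R u v → R x v ⊆ R u v
  b3_left : ∀ u v x y, x ∈ R u v → y ∈ R u x → x ∈ R y v
  b3_right : ∀ u v x y, x ∈ R u v → y ∈ R x v → x ∈ R u y

/-- The interval function `I_d` of a distance `d`: the points lying on a shortest path from `u` to
`v`. The finiteness condition makes the interval empty when `d u v = ⊤`. -/
def metricInterval {V : Type*} (d : V → V → ℝ≥0∞) (u v : V) : Set V :=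
  {w | d u v ≠ ⊤ ∧ d u w + d w v = d u v}

section MetricInterval

variable {V : Type*} {d : V → V → ℝ≥0∞} {u v w x y : V}

theorem eq_metricInterval {I : V → V → Set V}
    (hI_fin : ∀ u v, d u v ≠ ⊤ → I u v = {w : V | d u w + d w v = d u v})
    (hI_inf : ∀ u v, d u v = ⊤ → I u v = ∅) : I = metricInterval d := by
  ext u v w
  by_cases h : d u v = ⊤
  · simp [metricInterval, hI_inf u v h, h]
  · simp [metricInterval, hI_fin u v h, h]

theorem mem_metricInterval_swap :
    w ∈ metricInterval (Function.swap d) v u ↔ w ∈ metricInterval d u v := by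
  simp only [metricInterval, Function.swap, Set.mem_ofPred_eq, add_comm]

theorem dist_left_ne_top_of_mem_metricInterval (hw : w ∈ metricInterval d u v) : d u w ≠ ⊤ :=
  (ENNReal.add_ne_top.1 (hw.2 ▸ hw.1)).1

theorem dist_right_ne_top_of_mem_metricInterval (hw : w ∈ metricInterval d u v) : d w v ≠ ⊤ :=
  (ENNReal.add_ne_top.1 (hw.2 ▸ hw.1)).2

theorem left_mem_metricInterval (h_self : ∀ x, d x x = 0) (huv : d u v ≠ ⊤) :
    u ∈ metricInterval d u v :=
  ⟨huv, by rw [h_self, zero_add]⟩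

theorem right_mem_metricInterval (h_self : ∀ x, d x x = 0) (huv : d u v ≠ ⊤) :
    v ∈ metricInterval d u v :=
  ⟨huv, by rw [h_self, add_zero]⟩

theorem metricInterval_eq_empty_iff (h_self : ∀ x, d x x = 0) :
    metricInterval d u v = ∅ ↔ d u v = ⊤ := by
  refine ⟨fun h_empty ↦ ?_, fun h_top ↦ Set.eq_empty_of_forall_notMem fun _ hw ↦ hw.1 h_top⟩
  by_contra huv
  exact Set.notMem_empty u (h_empty ▸ left_mem_metricInterval h_self huv)

theorem metricInterval_self (h_eq : ∀ x y, d x y = 0 ↔ x = y) (u : V) :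
    metricInterval d u u = {u} := by
  have h_self : d u u = 0 := (h_eq u u).2 rfl
  ext w
  simp only [metricInterval, Set.mem_ofPred_eq, Set.mem_singleton_iff, h_self, add_eq_zero, h_eq]
  exact ⟨fun hw ↦ hw.2.2, fun hw ↦ ⟨zero_ne_top, hw.symm, hw⟩⟩

theorem dist_add_dist_add_dist_of_mem_metricInterval (hx : x ∈ metricInterval d u v)
    (hy : y ∈ metricInterval d u x) : d u y + (d y x + d x v) = d u v := by
  rw [← add_assoc, hy.2, hx.2]

theorem triangle_swap (h_triangle : ∀ x y z, d x y ≤ d x z + d z y) (x y z : V) :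
    Function.swap d x y ≤ Function.swap d x z + Function.swap d z y :=
  (h_triangle y x z).trans_eq (add_comm _ _)

theorem metricInterval_subset_left (h_triangle : ∀ x y z, d x y ≤ d x z + d z y)
    (hx : x ∈ metricInterval d u v) :
    metricInterval d u x ⊆ metricInterval d u v := by
  intro y hy
  refine ⟨hx.1, le_antisymm ?_ (h_triangle u v y)⟩
  calc d u y + d y v ≤ d u y + (d y x + d x v) := by gcongr; exact h_triangle y v x
    _ = d u v := dist_add_dist_add_dist_of_mem_metricInterval hx hy

theorem metricInterval_subset_right (h_triangle : ∀ x y z, d x y ≤ d x z + d z y)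
    (hx : x ∈ metricInterval d u v) :
    metricInterval d x v ⊆ metricInterval d u v := fun _ hy ↦
  mem_metricInterval_swap.1 <| metricInterval_subset_left (triangle_swap h_triangle)
    (mem_metricInterval_swap.2 hx) (mem_metricInterval_swap.2 hy)

theorem mem_metricInterval_of_mem_left (h_triangle : ∀ x y z, d x y ≤ d x z + d z y)
    (hx : x ∈ metricInterval d u v) (hy : y ∈ metricInterval d u x) : x ∈ metricInterval d y v := by
  have hyv : y ∈ metricInterval d u v := metricInterval_subset_left h_triangle hx hy
  refine ⟨dist_right_ne_top_of_mem_metricInterval hyv, ?_⟩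
  refine (ENNReal.add_right_inj (dist_left_ne_top_of_mem_metricInterval hyv)).1 ?_
  rw [dist_add_dist_add_dist_of_mem_metricInterval hx hy, hyv.2]

theorem mem_metricInterval_of_mem_right (h_triangle : ∀ x y z, d x y ≤ d x z + d z y)
    (hx : x ∈ metricInterval d u v) (hy : y ∈ metricInterval d x v) : x ∈ metricInterval d u y :=
  mem_metricInterval_swap.1 <| mem_metricInterval_of_mem_left (triangle_swap h_triangle)
    (mem_metricInterval_swap.2 hx) (mem_metricInterval_swap.2 hy)

end MetricInterval

theorem isDirectedTransit_metricInterval {V : Type*} {d : V → V → ℝ≥0∞}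
    (h_eq : ∀ x y, d x y = 0 ↔ x = y) (h_triangle : ∀ x y z, d x y ≤ d x z + d z y) :
    IsDirectedTransit (metricInterval d) := by
  have h_self (x : V) : d x x = 0 := (h_eq x x).2 rfl
  refine ⟨?t0, ?t1, metricInterval_self h_eq⟩ <;>
    simp only [ne_eq, metricInterval_eq_empty_iff h_self]
  case t0 =>
    exact fun u v w huw hwv ↦
      ne_top_of_le_ne_top (ENNReal.add_ne_top.2 ⟨huw, hwv⟩) (h_triangle u v w)
  case t1 =>
    exact fun u v huv ↦
      ⟨left_mem_metricInterval h_self huv, right_mem_metricInterval h_self huv⟩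

theorem stmt_19_general {V : Type*} {d : V → V → ℝ≥0∞}
    (h_eq : ∀ x y, d x y = 0 ↔ x = y) (h_triangle : ∀ x y z, d x y ≤ d x z + d z y) :
    IsGeometricTransit (metricInterval d) where
  toIsDirectedTransit := isDirectedTransit_metricInterval h_eq h_triangle
  tr2 u v w _ h_empty hw := by
    simp only [metricInterval_eq_empty_iff fun x ↦ (h_eq x x).2 rfl] at h_empty
    exact h_empty.elim (dist_left_ne_top_of_mem_metricInterval hw)
      (dist_right_ne_top_of_mem_metricInterval hw)
  b2_left _ _ _ := metricInterval_subset_left h_triangle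
  b2_right _ _ _ := metricInterval_subset_right h_triangle
  b3_left _ _ _ _ := mem_metricInterval_of_mem_left h_triangle
  b3_right _ _ _ _ := mem_metricInterval_of_mem_right h_triangle

/-- The interval function `I_d` of a finite quasimetric space `(V,d)` is a
geometric directed transit function: it satisfies (t0), (t1), (t3), (tr2), (b2₁), (b2₂),
(b3₁), and (b3₂). -/
theorem stmt_19 {V : Type*} [Fintype V] [Nonempty V]
    (d : V → V → ℝ≥0∞)
    (h_eq : ∀ x y, d x y = 0 ↔ x = y)
    (h_triangle : ∀ x y z, d x y ≤ d x z + d z y)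
    (I : V → V → Set V)
    (hI_fin : ∀ u v, d u v ≠ ⊤ → I u v = {w : V | d u w + d w v = d u v})
    (hI_inf : ∀ u v, d u v = ⊤ → I u v = ∅) :
    -- (t0)
    (∀ u v w, I u w ≠ ∅ → I w v ≠ ∅ → I u v ≠ ∅) ∧
    -- (t1)
    (∀ u v, I u v ≠ ∅ → u ∈ I u v ∧ v ∈ I u v) ∧
    -- (t3)
    (∀ u, I u u = {u}) ∧
    -- (tr2)
    (∀ u v w, u ≠ v → (I u w = ∅ ∨ I w v = ∅) → w ∉ I u v) ∧
    -- (b2₁)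
    (∀ u v x, x ∈ I u v → I u x ⊆ I u v) ∧
    -- (b2₂)
    (∀ u v x, x ∈ I u v → I x v ⊆ I u v) ∧
    -- (b3₁)
    (∀ u v x y, x ∈ I u v → y ∈ I u x → x ∈ I y v) ∧
    -- (b3₂)
    (∀ u v x y, x ∈ I u v → y ∈ I x v → x ∈ I u y) := by
  have h : IsGeometricTransit I :=
    eq_metricInterval hI_fin hI_inf ▸ stmt_19_general h_eq h_triangle
  exact ⟨h.t0, h.t1, h.t3, h.tr2, h.b2_left, h.b2_right, h.b3_left, h.b3_right⟩
end
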